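/- arXiv:2111.00557 — 2 statements merged into one kernel-verified Lean document; each statement's English description precedes it below -/
import Mathlib

section
/- Let A be a nonzero real symmetric n×n matrix and x ~ N(0, Iₙ) a standard Gaussian vector. For every 0 < r < 1 with ξ_r := ∑_{k=0}^∞ r^k/(k+2) and every a > 0, P(|xᵀAx - E[xᵀAx]| > a) ≤ 2·exp(-min{a²/(8ξ_r·‖A‖₂²), r·a/(4·‖A‖)}), where ‖A‖₂ is the Hilbert–Schmidt (Frobenius) norm and ‖A‖ the operator norm. -/
open MeasureTheory ProbabilityTheory Matrix

noncomputable def xi (r : ℝ) : ℝ := ∑' k : ℕ, r ^ k / ((k : ℝ) + 2)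

/-- The Euclidean operator norm of a matrix. -/
noncomputable def opNorm {n : ℕ} (A : Matrix (Fin n) (Fin n) ℝ) : ℝ :=
  sSup {c | ∃ v : Fin n → ℝ, Real.sqrt (∑ i, v i ^ 2) ≤ 1 ∧
    c = Real.sqrt (∑ i, (A.mulVec v i) ^ 2)}

lemma aux_summable {r : ℝ} (hr : r ∈ Set.Ioo (0 : ℝ) 1) :
    Summable (fun k : ℕ => r ^ k / ((k : ℝ) + 2)) := by
  refine Summable.of_nonneg_of_le (fun k => ?_) (fun k => ?_)
    (summable_geometric_of_lt_one hr.1.le hr.2)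
  · have := hr.1
    positivity
  · have h : 0 ≤ r ^ k := pow_nonneg hr.1.le k
    apply div_le_self h
    have : (0 : ℝ) ≤ k := Nat.cast_nonneg k
    linarith

lemma aux_xi_pos {r : ℝ} (hr : r ∈ Set.Ioo (0 : ℝ) 1) : 0 < xi r := by
  have h0 := hr.1
  refine (aux_summable hr).tsum_pos (fun k => by positivity) 0 (by norm_num)

lemma aux_log {r s : ℝ} (hr : r ∈ Set.Ioo (0 : ℝ) 1) (hs : |s| ≤ r) :
    -Real.log (1 - s) - s ≤ s ^ 2 * xi r := by
  have hs1 : |s| < 1 := hs.trans_lt hr.2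
  have h1 := Real.hasSum_pow_div_log_of_abs_lt_one hs1
  rw [← hasSum_nat_add_iff' 1] at h1
  simp only [Finset.sum_range_one] at h1
  have h2 := (aux_summable hr).hasSum.mul_left (s ^ 2)
  have h3 := hasSum_le (fun k => ?_) h1 h2
  · simpa [xi] using h3
  · have e : s ^ (k + 1 + 1) / (((k + 1 : ℕ) : ℝ) + 1) = s ^ 2 * (s ^ k / ((k : ℝ) + 2)) := by
      push_cast
      rw [show (k : ℝ) + 1 + 1 = k + 2 by ring]
      ring
    rw [e]
    have h5 : s ^ k ≤ r ^ k := by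
     calc s ^ k ≤ |s ^ k| := le_abs_self _
      _ = |s| ^ k := abs_pow _ _
      _ ≤ r ^ k := by gcongr
    exact mul_le_mul_of_nonneg_left (div_le_div_of_nonneg_right h5 (by positivity)) (sq_nonneg s)

lemma aux_integral {s : ℝ} (hs : s < 1) :
    ∫ x, Real.exp (s / 2 * (x ^ 2 - 1)) ∂(gaussianReal 0 1)
      = Real.exp (-Real.log (1 - s) / 2 - s / 2) := by
  rw [integral_gaussianReal_eq_integral_smul (by norm_num)]
  have h : ∀ x : ℝ, gaussianPDFReal 0 1 x • Real.exp (s / 2 * (x ^ 2 - 1))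
      = ((√(2 * Real.pi))⁻¹ * Real.exp (-s / 2)) * Real.exp (-((1 - s) / 2) * x ^ 2) := by
    intro x
    simp only [gaussianPDFReal, smul_eq_mul, NNReal.coe_one, mul_one, sub_zero]
    rw [mul_assoc, mul_assoc, ← Real.exp_add, ← Real.exp_add]
    congr 2
    ring
  simp_rw [h]
  rw [integral_const_mul, integral_gaussian]
  have hp := Real.pi_pos
  have h1 : 0 < 1 - s := by linarith
  rw [show Real.pi / ((1 - s) / 2) = (2 * Real.pi) * (1 - s)⁻¹ by field_simp,
    Real.sqrt_mul (by positivity : 0 ≤ 2 * Real.pi) (1 - s)⁻¹, Real.sqrt_inv]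
  have h2 : √(1 - s) = Real.exp (Real.log (1 - s) / 2) := by
    rw [Real.exp_half, Real.exp_log h1]
  have h3 : √(2 * Real.pi) ≠ 0 := by positivity
  rw [h2, ← Real.exp_neg]
  calc _ = (√(2 * Real.pi))⁻¹ * √(2 * Real.pi) *
        (Real.exp (-s / 2) * Real.exp (-(Real.log (1 - s) / 2))) := by ring
    _ = _ := by
      rw [inv_mul_cancel₀ h3, one_mul, ← Real.exp_add]
      congr 1
      ring

lemma aux_integrable {s : ℝ} (hs : s < 1) :
    Integrable (fun x => Real.exp (s / 2 * (x ^ 2 - 1))) (gaussianReal 0 1) := by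
  by_contra h
  have := aux_integral hs
  rw [integral_undef h] at this
  exact absurd this (Real.exp_pos _).ne

lemma aux_chernoff {n : ℕ} (l : Fin n → ℝ) {M F r a : ℝ} (hM : 0 < M) (hl : ∀ i, |l i| ≤ M)
    (hF : F = ∑ i, l i ^ 2) (hF0 : 0 < F)
    (hr : r ∈ Set.Ioo (0 : ℝ) 1) (ha : 0 < a) :
    (Measure.pi fun _ : Fin n => gaussianReal 0 1).real {y | a ≤ ∑ i, l i * (y i ^ 2 - 1)}
      ≤ Real.exp (-min (a ^ 2 / (8 * xi r * F)) (r * a / (4 * M))) := by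
  have hx := aux_xi_pos hr
  have hr0 := hr.1
  set t : ℝ := min (a / (4 * xi r * F)) (r / (2 * M)) with ht
  have ht0 : 0 < t := by
    rw [ht]
    apply lt_min <;> positivity
  have ht1 : t ≤ a / (4 * xi r * F) := min_le_left _ _
  have ht2 : t ≤ r / (2 * M) := min_le_right _ _
  have hs : ∀ i, |2 * t * l i| ≤ r := by
    intro i
    rw [abs_mul, abs_of_pos (by positivity : 0 < 2 * t)]
    rw [le_div_iff₀ (by positivity)] at ht2
    nlinarith [hl i]
  have hs1 : ∀ i, 2 * t * l i < 1 := fun i =>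
    (le_abs_self _).trans_lt ((hs i).trans_lt hr.2)
  have e : ∀ y : Fin n → ℝ, Real.exp (t * ∑ i, l i * (y i ^ 2 - 1))
      = ∏ i, Real.exp ((2 * t * l i) / 2 * (y i ^ 2 - 1)) := by
    intro y
    rw [← Real.exp_sum, Finset.mul_sum]
    congr 1
    refine Finset.sum_congr rfl fun i _ => ?_
    ring
  have hint : Integrable (fun y : Fin n → ℝ => Real.exp (t * ∑ i, l i * (y i ^ 2 - 1)))
      (Measure.pi fun _ : Fin n => gaussianReal 0 1) := by
    simp_rw [e]
    exact Integrable.fintype_prod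
      (f := fun i (x : ℝ) => Real.exp ((2 * t * l i) / 2 * (x ^ 2 - 1)))
      (fun i => aux_integrable (hs1 i))
  have hch := measure_ge_le_exp_mul_mgf a ht0.le hint
  refine hch.trans ?_
  have hm : mgf (fun y : Fin n → ℝ => ∑ i, l i * (y i ^ 2 - 1))
      (Measure.pi fun _ : Fin n => gaussianReal 0 1) t ≤ Real.exp (2 * t ^ 2 * xi r * F) := by
    rw [mgf]
    simp_rw [e]
    rw [integral_fintype_prod_eq_prod
      (f := fun i (x : ℝ) => Real.exp ((2 * t * l i) / 2 * (x ^ 2 - 1)))]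
    simp_rw [fun i => aux_integral (hs1 i)]
    rw [← Real.exp_sum, Real.exp_le_exp, hF, Finset.mul_sum]
    refine Finset.sum_le_sum fun i _ => ?_
    have := aux_log hr (hs i)
    nlinarith
  calc _ ≤ Real.exp (-t * a) * Real.exp (2 * t ^ 2 * xi r * F) := by gcongr
    _ = Real.exp (-t * a + 2 * t ^ 2 * xi r * F) := by rw [Real.exp_add]
    _ ≤ _ := by
      rw [Real.exp_le_exp]
      have key : 2 * t * xi r * F ≤ a / 2 := by
        rw [le_div_iff₀ (by positivity)] at ht1
        linarith
      have key2 : 2 * t ^ 2 * xi r * F ≤ t * a / 2 := by nlinarith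
      have key3 : min (a ^ 2 / (8 * xi r * F)) (r * a / (4 * M)) = t * a / 2 := by
        have : a ^ 2 / (8 * xi r * F) = a / (4 * xi r * F) * (a / 2) := by
          field_simp; norm_num
        rw [this, show r * a / (4 * M) = r / (2 * M) * (a / 2) by field_simp; norm_num,
          ← min_mul_of_nonneg _ _ (by positivity : 0 ≤ a / 2), ← ht]
        ring
      rw [key3]
      linarith

lemma aux_rot {n : ℕ} (b : OrthonormalBasis (Fin n) ℝ (EuclideanSpace ℝ (Fin n))) :
    MeasurePreserving (fun y : Fin n → ℝ => (WithLp.ofLp (∑ i, y i • b i) : Fin n → ℝ))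
      (Measure.pi fun _ : Fin n => gaussianReal 0 1)
      (Measure.pi fun _ : Fin n => gaussianReal 0 1) := by
  refine ⟨by fun_prop, ?_⟩
  have h1 := map_pi_eq_stdGaussian (ι := Fin n)
  rw [stdGaussian_eq_map_pi_orthonormalBasis b] at h1
  have h2 := congrArg (Measure.map (WithLp.ofLp : EuclideanSpace ℝ (Fin n) → (Fin n → ℝ))) h1
  rw [Measure.map_map (by fun_prop) (by fun_prop), Measure.map_map (by fun_prop) (by fun_prop)] at h2
  have h3 : (WithLp.ofLp : EuclideanSpace ℝ (Fin n) → (Fin n → ℝ)) ∘ WithLp.toLp 2 = id := rfl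
  rw [h3, Measure.map_id] at h2
  exact h2.symm

lemma aux_dot {n : ℕ} (b : OrthonormalBasis (Fin n) ℝ (EuclideanSpace ℝ (Fin n))) (i j : Fin n) :
    (b i).ofLp ⬝ᵥ (b j).ofLp = if i = j then 1 else 0 := by
  have := orthonormal_iff_ite.1 b.orthonormal i j
  rw [← this, EuclideanSpace.inner_eq_star_dotProduct, dotProduct_comm]
  simp

lemma aux_quad {n : ℕ} {A : Matrix (Fin n) (Fin n) ℝ} (hA : A.IsHermitian) (y : Fin n → ℝ) :
    (WithLp.ofLp (∑ i, y i • hA.eigenvectorBasis i) : Fin n → ℝ) ⬝ᵥ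
      A.mulVec (WithLp.ofLp (∑ i, y i • hA.eigenvectorBasis i)) =
    ∑ i, hA.eigenvalues i * y i ^ 2 := by
  have h : (WithLp.ofLp (∑ i, y i • hA.eigenvectorBasis i) : Fin n → ℝ)
      = ∑ i, y i • (hA.eigenvectorBasis i).ofLp := by
    simp [WithLp.ofLp_sum]
  have h2 : A.mulVec (∑ i, y i • (hA.eigenvectorBasis i).ofLp) =
      ∑ i, (y i * hA.eigenvalues i) • (hA.eigenvectorBasis i).ofLp := by
    rw [Matrix.mulVec_sum]
    refine Finset.sum_congr rfl fun i _ => ?_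
    rw [Matrix.mulVec_smul, hA.mulVec_eigenvectorBasis, smul_smul]
  rw [h, h2, sum_dotProduct]
  refine Finset.sum_congr rfl fun i _ => ?_
  rw [dotProduct_sum]
  simp only [smul_dotProduct, dotProduct_smul, aux_dot, smul_eq_mul]
  simp
  ring

lemma aux_trace {n : ℕ} {A : Matrix (Fin n) (Fin n) ℝ} (hA : A.IsHermitian) :
    (Aᵀ * A).trace = ∑ i, hA.eigenvalues i ^ 2 := by
  have h1 : Aᵀ = A := by
    rw [← conjTranspose_eq_transpose_of_trivial]
    exact hA
  rw [h1]
  conv_lhs => rw [hA.spectral_theorem, ← map_mul, Unitary.conjStarAlgAut_apply, trace_mul_comm,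
    ← mul_assoc]
  simp [Matrix.trace, sq]

lemma aux_bdd {n : ℕ} (A : Matrix (Fin n) (Fin n) ℝ) :
    BddAbove {c | ∃ v : Fin n → ℝ, Real.sqrt (∑ i, v i ^ 2) ≤ 1 ∧
      c = Real.sqrt (∑ i, (A.mulVec v i) ^ 2)} := by
  refine ⟨Real.sqrt (∑ i, ∑ j, A i j ^ 2), ?_⟩
  rintro c ⟨v, hv, rfl⟩
  rw [Real.sqrt_le_one] at hv
  apply Real.sqrt_le_sqrt
  refine Finset.sum_le_sum fun i _ => ?_
  have := Finset.sum_mul_sq_le_sq_mul_sq Finset.univ (fun j => A i j) v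
  have h0 : 0 ≤ ∑ j, A i j ^ 2 := Finset.sum_nonneg fun j _ => sq_nonneg _
  calc _ ≤ _ := this
    _ ≤ _ := by nlinarith

lemma aux_eig_le {n : ℕ} {A : Matrix (Fin n) (Fin n) ℝ} (hA : A.IsHermitian) (i : Fin n) :
    |hA.eigenvalues i| ≤ opNorm A := by
  have hv : ∑ j, (hA.eigenvectorBasis i).ofLp j ^ 2 = 1 := by
    have := aux_dot hA.eigenvectorBasis i i
    simpa [dotProduct, sq] using this
  refine le_csSup (aux_bdd A) ⟨(hA.eigenvectorBasis i).ofLp, by rw [hv]; simp, ?_⟩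
  rw [hA.mulVec_eigenvectorBasis]
  simp only [Pi.smul_apply, smul_eq_mul, mul_pow]
  rw [← Finset.mul_sum, hv, mul_one, Real.sqrt_sq_eq_abs]

lemma aux_sq_integral : ∫ x, x ^ 2 ∂(gaussianReal 0 1) = 1 := by
  have h := variance_fun_id_gaussianReal (μ := 0) (v := 1)
  rw [variance_eq_integral measurable_id'.aemeasurable] at h
  simpa using h

lemma aux_sq_integrable : Integrable (fun x : ℝ => x ^ 2) (gaussianReal 0 1) := by
  by_contra h
  have := aux_sq_integral
  rw [integral_undef h] at this
  norm_num at this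

theorem hanson_wright_r (n : ℕ) (A : Matrix (Fin n) (Fin n) ℝ)
    (hsymm : A.IsSymm) (hA : A ≠ 0)
    (r : ℝ) (hr : r ∈ Set.Ioo (0 : ℝ) 1) (a : ℝ) (ha : 0 < a) :
    (Measure.pi fun _ : Fin n => gaussianReal 0 1)
        {x | a < |x ⬝ᵥ A.mulVec x -
          ∫ y, y ⬝ᵥ A.mulVec y ∂(Measure.pi fun _ : Fin n => gaussianReal 0 1)|}
      ≤ ENNReal.ofReal (2 * Real.exp
          (-min (a ^ 2 / (8 * xi r * (Aᵀ * A).trace))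
            (r * a / (4 * opNorm A)))) := by
  have hH : A.IsHermitian := by
    rw [Matrix.IsHermitian, conjTranspose_eq_transpose_of_trivial]
    exact hsymm
  have hrot := aux_rot hH.eigenvectorBasis
  set T : (Fin n → ℝ) → (Fin n → ℝ) :=
    fun y => WithLp.ofLp (∑ i, y i • hH.eigenvectorBasis i) with hT
  have hquad : ∀ y, T y ⬝ᵥ A.mulVec (T y) = ∑ i, hH.eigenvalues i * y i ^ 2 := aux_quad hH
  have hcont : Continuous (fun x : Fin n → ℝ => x ⬝ᵥ A.mulVec x) := by
    simp only [dotProduct, mulVec]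
    fun_prop
  have hF : (Aᵀ * A).trace = ∑ i, hH.eigenvalues i ^ 2 := aux_trace hH
  have hF0 : 0 < (Aᵀ * A).trace := by
    refine lt_of_le_of_ne (by rw [hF]; exact Finset.sum_nonneg fun i _ => sq_nonneg _) ?_
    intro h
    apply hA
    have := trace_conjTranspose_mul_self_eq_zero_iff (A := A)
    rw [conjTranspose_eq_transpose_of_trivial] at this
    exact this.1 h.symm
  have hM : 0 < opNorm A := by
    by_contra hneg
    push Not at hneg
    rw [hF] at hF0
    refine hF0.ne' (Finset.sum_eq_zero fun i _ => ?_)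
    have h1 := aux_eig_le hH i
    have h2 : hH.eigenvalues i = 0 := abs_nonpos_iff.1 (h1.trans hneg)
    simp [h2]
  have hE : ∫ y, y ⬝ᵥ A.mulVec y ∂(Measure.pi fun _ : Fin n => gaussianReal 0 1)
      = ∑ i, hH.eigenvalues i := by
    conv_lhs => rw [← hrot.map_eq]
    rw [integral_map hrot.measurable.aemeasurable hcont.aestronglyMeasurable]
    simp_rw [hquad]
    rw [integral_finsetSum]
    · refine Finset.sum_congr rfl fun i _ => ?_
      rw [integral_const_mul, integral_comp_eval (μ := fun _ : Fin n => gaussianReal 0 1) (i := i)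
        (f := fun x : ℝ => x ^ 2)
        aux_sq_integrable.aestronglyMeasurable, aux_sq_integral, mul_one]
    · intro i _
      exact (integrable_comp_eval (μ := fun _ : Fin n => gaussianReal 0 1) (i := i)
        (f := fun x : ℝ => x ^ 2) aux_sq_integrable).const_mul _
  rw [hE]
  have hmeas : MeasurableSet {x : Fin n → ℝ | a < |x ⬝ᵥ A.mulVec x - ∑ i, hH.eigenvalues i|} :=
    measurableSet_lt measurable_const (hcont.sub continuous_const).abs.measurable
  rw [← hrot.measure_preimage hmeas.nullMeasurableSet]
  set B := Real.exp (-min (a ^ 2 / (8 * xi r * (Aᵀ * A).trace)) (r * a / (4 * opNorm A))) with hB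
  have c1 := aux_chernoff hH.eigenvalues hM (aux_eig_le hH) hF hF0 hr ha
  have c2 := aux_chernoff (fun i => - hH.eigenvalues i) hM
    (fun i => by rw [abs_neg]; exact aux_eig_le hH i) (by simpa using hF) hF0 hr ha
  rw [← hB] at c1 c2
  refine ENNReal.le_ofReal_iff_toReal_le (measure_ne_top _ _) (by positivity) |>.2 ?_
  change (Measure.pi fun _ : Fin n => gaussianReal 0 1).real _ ≤ _
  refine (measureReal_mono (s₂ := {y | a ≤ ∑ i, hH.eigenvalues i * (y i ^ 2 - 1)} ∪
    {y | a ≤ ∑ i, (- hH.eigenvalues i) * (y i ^ 2 - 1)}) ?_).trans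
      ((measureReal_union_le _ _).trans (by linarith))
  intro y hy
  simp only [Set.mem_preimage, Set.mem_setOf_eq, hquad] at hy
  have e1 : ∑ i, hH.eigenvalues i * (y i ^ 2 - 1) =
      ∑ i, hH.eigenvalues i * y i ^ 2 - ∑ i, hH.eigenvalues i := by
    rw [← Finset.sum_sub_distrib]
    exact Finset.sum_congr rfl fun i _ => by ring
  have e2 : ∑ i, (-hH.eigenvalues i) * (y i ^ 2 - 1) =
      -(∑ i, hH.eigenvalues i * y i ^ 2 - ∑ i, hH.eigenvalues i) := by
    rw [← e1, ← Finset.sum_neg_distrib]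
    exact Finset.sum_congr rfl fun i _ => by ring
  simp only [Set.mem_union, Set.mem_setOf_eq, e1, e2]
  rcases lt_abs.1 hy with h | h
  · exact Or.inl h.le
  · exact Or.inr h.le
end

section
/- Let A be a nonzero real symmetric n×n matrix and x ~ N(0, Iₙ). With κ := (1/4)·max_{0<r<1} min{r, 1/(2ξ_r)} where ξ_r := ∑_{k=0}^∞ r^k/(k+2), one has P(|xᵀAx - E[xᵀAx]| ≥ a) ≤ 2·exp(-κ·min{a²/‖A‖₂², a/‖A‖}) for every a > 0. -/
open MeasureTheory ProbabilityTheory Matrix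

/-- The constant κ = (1/4)·sup_{0<r<1} min{r, 1/(2ξ_r)}. -/
noncomputable def kappa : ℝ :=
  (1/4) * sSup {m | ∃ r ∈ Set.Ioo (0 : ℝ) 1, m = min r (1 / (2 * xi r))}


lemma hw_xi_summable {r : ℝ} (h0 : 0 < r) (h1 : r < 1) :
    Summable (fun k : ℕ => r ^ k / ((k : ℝ) + 2)) := by
  refine Summable.of_nonneg_of_le (fun k => by positivity) (fun k => ?_)
    (summable_geometric_of_lt_one h0.le h1)
  exact div_le_self (by positivity) (by linarith [Nat.cast_nonneg (α := ℝ) k])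

lemma hw_xi_pos {r : ℝ} (h0 : 0 < r) (h1 : r < 1) : 0 < xi r :=
  (hw_xi_summable h0 h1).tsum_pos (fun k => by positivity) 0 (by norm_num)

lemma hw_log_bound {r t : ℝ} (h0 : 0 < r) (h1 : r < 1) (ht : |t| ≤ r) :
    -Real.log (1 - t) - t ≤ t ^ 2 * xi r := by
  have h := Real.hasSum_pow_div_log_of_abs_lt_one (ht.trans_lt h1)
  have h2 := (hasSum_nat_add_iff' 1).2 h
  simp only [Finset.sum_range_one, Nat.cast_zero, zero_add, pow_one, div_one] at h2
  have h3 := (hw_xi_summable h0 h1).hasSum.mul_left (t ^ 2)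
  refine hasSum_le (fun k => ?_) h2 h3
  have : t ^ k ≤ r ^ k := by
    calc t ^ k ≤ |t ^ k| := le_abs_self _
      _ = |t| ^ k := abs_pow _ _
      _ ≤ r ^ k := pow_le_pow_left₀ (abs_nonneg _) ht k
  rw [← mul_div_assoc]
  push_cast
  rw [show (k : ℝ) + 1 + 1 = k + 2 by ring, show t ^ (k + 1 + 1) = t ^ 2 * t ^ k by ring]
  gcongr

lemma hw_integrable_exp_sq {c : ℝ} (hc : c < 1 / 2) :
    Integrable (fun x : ℝ => Real.exp (c * x ^ 2)) (gaussianReal 0 1) := by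
  rw [gaussianReal_of_var_ne_zero _ one_ne_zero,
    integrable_withDensity_iff (by fun_prop) (by simp [gaussianPDF])]
  have h := (integrable_exp_neg_mul_sq (b := 1 / 2 - c) (by linarith)).const_mul
    (√(2 * Real.pi * 1))⁻¹
  refine h.congr (.of_forall fun x => ?_)
  simp only [gaussianPDF, gaussianPDFReal, NNReal.coe_one, sub_zero]
  rw [ENNReal.toReal_ofReal (by positivity), mul_left_comm, ← Real.exp_add]
  congr 2; ring

lemma hw_integral_exp_sq {c : ℝ} (hc : c < 1 / 2) :
    ∫ x : ℝ, Real.exp (c * x ^ 2) ∂(gaussianReal 0 1)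
      = Real.exp (-(1 / 2) * Real.log (1 - 2 * c)) := by
  rw [integral_gaussianReal_eq_integral_smul one_ne_zero]
  have h : ∀ x : ℝ, gaussianPDFReal 0 1 x • Real.exp (c * x ^ 2)
      = (√(2 * Real.pi * 1))⁻¹ * Real.exp (-(1 / 2 - c) * x ^ 2) := fun x => by
    simp only [gaussianPDFReal, NNReal.coe_one, sub_zero, smul_eq_mul]
    rw [mul_assoc, ← Real.exp_add]
    congr 2; ring
  simp_rw [h]
  rw [integral_const_mul, integral_gaussian, ← Real.sqrt_inv, ← Real.sqrt_mul (by positivity)]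
  have hp : 0 < 1 - 2 * c := by linarith
  have : (2 * Real.pi * 1)⁻¹ * (Real.pi / (1 / 2 - c)) = (1 - 2 * c)⁻¹ := by
    have : 1 / 2 - c ≠ 0 := by linarith
    have := Real.pi_ne_zero
    have := hp.ne'
    field_simp
  rw [this, Real.sqrt_eq_rpow, Real.rpow_def_of_pos (by positivity), Real.log_inv]
  congr 1; ring

lemma hw_one_dim {r c : ℝ} (h0 : 0 < r) (h1 : r < 1) (hc : |2 * c| ≤ r) :
    ∫ x : ℝ, Real.exp (c * (x ^ 2 - 1)) ∂(gaussianReal 0 1) ≤ Real.exp (2 * c ^ 2 * xi r) := by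
  have hc' : c < 1 / 2 := by linarith [le_abs_self (2 * c)]
  have : ∀ x : ℝ, Real.exp (c * (x ^ 2 - 1)) = Real.exp (-c) * Real.exp (c * x ^ 2) := fun x => by
    rw [← Real.exp_add]; congr 1; ring
  simp_rw [this]
  rw [integral_const_mul, hw_integral_exp_sq hc', ← Real.exp_add, Real.exp_le_exp]
  nlinarith [hw_log_bound h0 h1 hc]

lemma hw_integrable_one {c : ℝ} (hc : c < 1 / 2) :
    Integrable (fun x : ℝ => Real.exp (c * (x ^ 2 - 1))) (gaussianReal 0 1) := by
  have : ∀ x : ℝ, Real.exp (c * (x ^ 2 - 1)) = Real.exp (-c) * Real.exp (c * x ^ 2) := fun x => by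
    rw [← Real.exp_add]; congr 1; ring
  simp_rw [this]
  exact (hw_integrable_exp_sq hc).const_mul _

lemma hw_diag {n : ℕ} (μ : Fin n → ℝ) {r M F a : ℝ} (h0 : 0 < r) (h1 : r < 1) (hM : 0 < M)
    (hF : 0 < F) (hFe : ∑ i, μ i ^ 2 = F) (hμ : ∀ i, |μ i| ≤ M) (ha : 0 < a) :
    (Measure.pi fun _ : Fin n => gaussianReal 0 1).real
      {x | a ≤ ∑ i, μ i * (x i ^ 2 - 1)} ≤
      Real.exp (-(1 / 4 * min r (1 / (2 * xi r)) * min (a ^ 2 / F) (a / M))) := by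
  have hx := hw_xi_pos h0 h1
  set l := min (a / (4 * xi r * F)) (r / (2 * M)) with hl
  have hl0 : 0 < l := by positivity
  have hl1 : l ≤ a / (4 * xi r * F) := min_le_left _ _
  have hl2 : l ≤ r / (2 * M) := min_le_right _ _
  have hc : ∀ i, |2 * (l * μ i)| ≤ r := fun i => by
    rw [abs_mul, abs_mul, abs_of_pos hl0, abs_two]
    rw [le_div_iff₀ (by positivity)] at hl2
    nlinarith [hμ i, mul_le_mul_of_nonneg_left (hμ i) hl0.le]
  have hexp : ∀ x : Fin n → ℝ, Real.exp (l * ∑ i, μ i * (x i ^ 2 - 1))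
      = ∏ i, Real.exp (l * μ i * (x i ^ 2 - 1)) := fun x => by
    rw [← Real.exp_sum, Finset.mul_sum]; simp_rw [mul_assoc]
  have hint : Integrable (fun x : Fin n → ℝ => Real.exp (l * ∑ i, μ i * (x i ^ 2 - 1)))
      (Measure.pi fun _ : Fin n => gaussianReal 0 1) := by
    simp_rw [hexp]
    exact Integrable.fintype_prod (f := fun i y => Real.exp (l * μ i * (y ^ 2 - 1)))
      (fun i => hw_integrable_one (by linarith [le_abs_self (2 * (l * μ i)), hc i]))
  have hch := measure_ge_le_exp_mul_mgf a hl0.le hint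
  refine hch.trans ?_
  have hm : mgf (fun x : Fin n → ℝ => ∑ i, μ i * (x i ^ 2 - 1))
      (Measure.pi fun _ : Fin n => gaussianReal 0 1) l ≤ Real.exp (2 * l ^ 2 * F * xi r) := by
    rw [mgf]
    simp_rw [hexp]
    rw [integral_fintype_prod_eq_prod (f := fun i y => Real.exp (l * μ i * (y ^ 2 - 1)))]
    calc _ ≤ ∏ i, Real.exp (2 * (l * μ i) ^ 2 * xi r) :=
          Finset.prod_le_prod (fun i _ => integral_nonneg fun x => (Real.exp_pos _).le)
            fun i _ => hw_one_dim h0 h1 (hc i)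
      _ = _ := by
          rw [← Real.exp_sum, ← hFe, Finset.mul_sum, Finset.sum_mul]
          congr 1; refine Finset.sum_congr rfl fun i _ => by ring
  refine (mul_le_mul_of_nonneg_left hm (Real.exp_pos _).le).trans ?_
  rw [← Real.exp_add, Real.exp_le_exp]
  have e1 : 2 * l ^ 2 * F * xi r ≤ l * a / 2 := by
    rw [le_div_iff₀ (by positivity)] at hl1
    nlinarith
  have e2 : 1 / 4 * min r (1 / (2 * xi r)) * min (a ^ 2 / F) (a / M) ≤ l * a / 2 := by
    have hmr : min r (1 / (2 * xi r)) ≤ r := min_le_left _ _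
    have hmx : min r (1 / (2 * xi r)) ≤ 1 / (2 * xi r) := min_le_right _ _
    have hm0 : 0 < min r (1 / (2 * xi r)) := by positivity
    have hz0 : 0 < min (a ^ 2 / F) (a / M) := by positivity
    have hz1 : min (a ^ 2 / F) (a / M) ≤ a ^ 2 / F := min_le_left _ _
    have hz2 : min (a ^ 2 / F) (a / M) ≤ a / M := min_le_right _ _
    rcases min_choice (a / (4 * xi r * F)) (r / (2 * M)) with h | h
    · rw [hl, h]
      calc _ ≤ 1 / 4 * (1 / (2 * xi r)) * (a ^ 2 / F) := by gcongr
        _ = _ := by field_simp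
    · rw [hl, h]
      calc _ ≤ 1 / 4 * r * (a / M) := by gcongr
        _ = _ := by field_simp; ring
  linarith

lemma hw_mean {n : ℕ} (μ : Fin n → ℝ) :
    ∫ y, ∑ i, μ i * y i ^ 2 ∂(Measure.pi fun _ : Fin n => gaussianReal 0 1) = ∑ i, μ i := by
  have hmp : ∀ i : Fin n, MeasurePreserving (Function.eval i)
      (Measure.pi fun _ : Fin n => gaussianReal 0 1) (gaussianReal 0 1) :=
    fun i => measurePreserving_eval _ i
  have hsq : Integrable (fun x : ℝ => x ^ 2) (gaussianReal 0 1) :=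
    (memLp_id_gaussianReal 2).integrable_sq
  have hv : ∫ x : ℝ, x ^ 2 ∂(gaussianReal 0 1) = 1 := by
    have h := variance_eq_sub (memLp_id_gaussianReal (μ := 0) (v := 1) 2)
    simp [variance_id_gaussianReal] at h
    exact h.symm
  rw [integral_finsetSum]
  · refine Finset.sum_congr rfl fun i _ => ?_
    rw [integral_const_mul]
    have := integral_map (μ := Measure.pi fun _ : Fin n => gaussianReal 0 1) (hmp i).measurable.aemeasurable
      (f := fun x : ℝ => x ^ 2) (by fun_prop)
    rw [(hmp i).map_eq, hv] at this
    simp only [Function.eval] at this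
    rw [← this, mul_one]
  · intro i _
    exact ((hmp i).integrable_comp_of_integrable hsq).const_mul _

lemma hw_rot {n : ℕ} (A : Matrix (Fin n) (Fin n) ℝ) (hA : A.IsHermitian) :
    MeasurePreserving (fun y : Fin n → ℝ => ∑ i, y i • (hA.eigenvectorBasis i).ofLp)
      (Measure.pi fun _ : Fin n => gaussianReal 0 1)
      (Measure.pi fun _ : Fin n => gaussianReal 0 1) := by
  refine ⟨by fun_prop, ?_⟩
  have h1 := stdGaussian_eq_map_pi_orthonormalBasis hA.eigenvectorBasis
  rw [← map_pi_eq_stdGaussian] at h1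
  have h2 := congrArg (Measure.map (WithLp.ofLp (p := 2) (V := Fin n → ℝ))) h1
  rw [Measure.map_map (by fun_prop) (by fun_prop), Measure.map_map (by fun_prop) (by fun_prop)] at h2
  have e1 : (WithLp.ofLp (p := 2) (V := Fin n → ℝ)) ∘ (WithLp.toLp 2) = id := rfl
  rw [e1, Measure.map_id] at h2
  have e2 : (fun y : Fin n → ℝ => ∑ i, y i • (hA.eigenvectorBasis i).ofLp) =
      (WithLp.ofLp (p := 2) (V := Fin n → ℝ)) ∘ fun x => ∑ i, x i • hA.eigenvectorBasis i := by
    ext y j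
    simp
  rw [e2]
  exact h2.symm

lemma hw_quad {n : ℕ} (A : Matrix (Fin n) (Fin n) ℝ) (hA : A.IsHermitian) (y : Fin n → ℝ) :
    (∑ i, y i • (hA.eigenvectorBasis i).ofLp) ⬝ᵥ
      A.mulVec (∑ i, y i • (hA.eigenvectorBasis i).ofLp) = ∑ i, hA.eigenvalues i * y i ^ 2 := by
  have ho : ∀ i j, (hA.eigenvectorBasis i).ofLp ⬝ᵥ (hA.eigenvectorBasis j).ofLp
      = if i = j then 1 else 0 := fun i j => by
    have := orthonormal_iff_ite.1 hA.eigenvectorBasis.orthonormal j i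
    rw [EuclideanSpace.inner_eq_star_dotProduct] at this
    simpa [eq_comm] using this
  rw [Matrix.mulVec_sum]
  simp_rw [Matrix.mulVec_smul, hA.mulVec_eigenvectorBasis, sum_dotProduct, dotProduct_sum,
    smul_dotProduct, dotProduct_smul, ho]
  simp
  refine Finset.sum_congr rfl fun i _ => by ring

lemma hw_trace {n : ℕ} (A : Matrix (Fin n) (Fin n) ℝ) (hA : A.IsHermitian) :
    ∑ i, hA.eigenvalues i ^ 2 = (Aᵀ * A).trace := by
  have ht : Aᵀ = A := by
    ext i j
    simpa using congrFun (congrFun hA.eq i) j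
  rw [ht]
  have h : A * A = _ := congrArg (fun B => B * B) hA.spectral_theorem
  rw [h, ← map_mul, Unitary.conjStarAlgAut_apply, Matrix.trace_mul_cycle]
  simp [pow_two]

lemma hw_op {n : ℕ} (A : Matrix (Fin n) (Fin n) ℝ) (hA : A.IsHermitian) (i : Fin n) :
    |hA.eigenvalues i| ≤ opNorm A := by
  have hv : ∑ j, (hA.eigenvectorBasis i).ofLp j ^ 2 = 1 := by
    have := hA.eigenvectorBasis.orthonormal.1 i
    rw [EuclideanSpace.norm_eq, Real.sqrt_eq_one] at this
    simpa using this
  refine le_csSup ?_ ⟨(hA.eigenvectorBasis i).ofLp, by rw [hv]; simp, ?_⟩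
  · let L := Matrix.toEuclideanCLM (n := Fin n) (𝕜 := ℝ) A
    refine ⟨‖L‖, ?_⟩
    rintro c ⟨v, hv, rfl⟩
    have h1 : ‖(WithLp.toLp 2 v : EuclideanSpace ℝ (Fin n))‖ ≤ 1 := by
      simpa [EuclideanSpace.norm_eq] using hv
    have h2 := L.le_opNorm_of_le h1
    simpa [L, EuclideanSpace.norm_eq] using h2
  · rw [hA.mulVec_eigenvectorBasis]
    simp [mul_pow, ← Finset.mul_sum, hv, Real.sqrt_sq_eq_abs]

theorem hanson_wright_kappa (n : ℕ) (A : Matrix (Fin n) (Fin n) ℝ)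
    (hsymm : A.IsSymm) (hA : A ≠ 0) (a : ℝ) (ha : 0 < a) :
    (Measure.pi fun _ : Fin n => gaussianReal 0 1)
        {x | a ≤ |x ⬝ᵥ A.mulVec x -
          ∫ y, y ⬝ᵥ A.mulVec y ∂(Measure.pi fun _ : Fin n => gaussianReal 0 1)|}
      ≤ ENNReal.ofReal (2 * Real.exp
          (-kappa * min (a ^ 2 / (Aᵀ * A).trace) (a / opNorm A))) := by
  have hH : A.IsHermitian := by
    rw [Matrix.IsHermitian, Matrix.conjTranspose]; ext i j; simpa using congrFun (congrFun hsymm i) j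
  set P := Measure.pi fun _ : Fin n => gaussianReal 0 1 with hP
  set μ := hH.eigenvalues with hμ
  have hne : ∃ i, μ i ≠ 0 := by
    by_contra! h
    exact hA (hH.eigenvalues_eq_zero_iff.1 (funext h))
  obtain ⟨i₀, hi₀⟩ := hne
  have hM : 0 < opNorm A := (abs_pos.2 hi₀).trans_le (hw_op A hH i₀)
  have hF : 0 < (Aᵀ * A).trace := by
    rw [← hw_trace A hH]
    exact Finset.sum_pos' (fun i _ => sq_nonneg _) ⟨i₀, Finset.mem_univ _, by positivity⟩
  have hrot := hw_rot A hH
  have hQ : Continuous fun x : Fin n → ℝ => x ⬝ᵥ A.mulVec x := by fun_prop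
  have hmean : ∫ y, y ⬝ᵥ A.mulVec y ∂P = ∑ i, μ i := by
    have h := integral_map (μ := P) hrot.measurable.aemeasurable
      (f := fun x : Fin n → ℝ => x ⬝ᵥ A.mulVec x) hQ.aestronglyMeasurable
    rw [hrot.map_eq] at h
    rw [h]
    simp_rw [hw_quad A hH]
    exact hw_mean _
  rw [hmean]
  have hmeas : MeasurableSet {x : Fin n → ℝ | a ≤ |x ⬝ᵥ A.mulVec x - ∑ i, μ i|} :=
    measurableSet_le measurable_const (hQ.sub continuous_const).abs.measurable
  rw [← hrot.measure_preimage hmeas.nullMeasurableSet]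
  simp only [Set.preimage_ofPred_eq, hw_quad A hH]
  set F := (Aᵀ * A).trace with hFd
  set M := opNorm A with hMd
  set z := min (a ^ 2 / F) (a / M) with hz
  have hz0 : 0 < z := by positivity
  set S := {y : Fin n → ℝ | a ≤ |∑ i, hH.eigenvalues i * y i ^ 2 - ∑ i, μ i|} with hS
  have hsub : S ⊆ {x | a ≤ ∑ i, μ i * (x i ^ 2 - 1)} ∪ {x | a ≤ ∑ i, (-μ i) * (x i ^ 2 - 1)} := by
    intro x hx
    have e1 : ∑ i, μ i * (x i ^ 2 - 1) = ∑ i, μ i * x i ^ 2 - ∑ i, μ i := by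
      rw [← Finset.sum_sub_distrib]; exact Finset.sum_congr rfl fun i _ => by ring
    have e2 : ∑ i, (-μ i) * (x i ^ 2 - 1) = -(∑ i, μ i * x i ^ 2 - ∑ i, μ i) := by
      rw [← e1, ← Finset.sum_neg_distrib]; exact Finset.sum_congr rfl fun i _ => by ring
    simp only [Set.mem_union, Set.mem_ofPred_eq, e1, e2]
    exact le_abs.1 hx
  have key : ∀ r ∈ Set.Ioo (0 : ℝ) 1, P.real S ≤
      2 * Real.exp (-(1 / 4 * min r (1 / (2 * xi r)) * z)) := by
    rintro r ⟨h0, h1⟩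
    have b1 := hw_diag μ h0 h1 hM hF (hw_trace A hH) (hw_op A hH) ha
    have b2 := hw_diag (fun i => -μ i) h0 h1 hM hF (by simpa using hw_trace A hH)
      (fun i => by simpa using hw_op A hH i) ha
    have := (measureReal_mono (μ := P) hsub).trans (measureReal_union_le _ _)
    linarith
  have hfin : P.real S ≤ 2 * Real.exp (-kappa * z) := by
    rcases (measureReal_nonneg (μ := P) (s := S)).eq_or_lt with h | h
    · rw [← h]; positivity
    have hk : sSup {m | ∃ r ∈ Set.Ioo (0 : ℝ) 1, m = min r (1 / (2 * xi r))} ≤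
        -Real.log (P.real S / 2) * 4 / z := by
      refine csSup_le ⟨_, 1 / 2, by norm_num, rfl⟩ ?_
      rintro m ⟨r, hr, rfl⟩
      have h2 := key r hr
      have h3 : Real.log (P.real S / 2) ≤ -(1 / 4 * min r (1 / (2 * xi r)) * z) := by
        rw [Real.log_le_iff_le_exp (by positivity)]; linarith
      rw [le_div_iff₀ hz0]
      linarith
    rw [le_div_iff₀ hz0] at hk
    have h3 : Real.log (P.real S / 2) ≤ -kappa * z := by
      rw [kappa]; linarith
    rw [Real.log_le_iff_le_exp (by positivity)] at h3
    linarith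
  rw [← ofReal_measureReal]
  exact ENNReal.ofReal_le_ofReal hfin
end
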